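/- arXiv:2303.17483 — 2 statements merged into one kernel-verified Lean document; each statement's English description precedes it below -/
import Mathlib

section
/- Let a > 0 and 0 < α < 1. The function u_p : [0,∞)×[0,∞) → ℝ defined by u_p(t,x) = ((1−α)²/(2(1+α)))^{1/(1−α)} · t^{2/(1−α)} is a nontrivial classical solution of the second mixed problem with Hölder nonlinearity: u_p is twice continuously differentiable on the closed quadrant [0,∞)×[0,∞), u_p ≥ 0, u_p is not identically zero, and it satisfies ∂²ₜu_p(t,x) − a²∂²ₓu_p(t,x) = (u_p(t,x))^α for all (t,x) ∈ [0,∞)×[0,∞), together with the zero initial conditions u_p(0,x) = 0, ∂ₜu_p(0,x) = 0 for all x ≥ 0 and the zero Neumann boundary condition ∂ₓu_p(t,0) = 0 for all t ≥ 0. -/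
open Set

/-- The particular self-similar solution
`u_p(t,x) = ((1−α)²/(2(1+α)))^{1/(1−α)} · t^{2/(1−α)}`. -/
noncomputable def uP (α : ℝ) : ℝ → ℝ → ℝ :=
  fun t _x => ((1 - α) ^ 2 / (2 * (1 + α))) ^ (1 / (1 - α)) * t ^ (2 / (1 - α))

/-- **A nontrivial classical solution of the second mixed problem with Hölder
nonlinearity.** For `a > 0` and `0 < α < 1`, the function
`u_p(t,x) = ((1−α)²/(2(1+α)))^{1/(1−α)} · t^{2/(1−α)}` is of class `C²` on the closed
quadrant `[0,∞) × [0,∞)` (one-sided derivatives at the boundary, i.e. derivatives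
within the quadrant), is nonnegative, is not identically zero, satisfies
`∂ₜ²u_p − a²∂ₓ²u_p = u_pᵅ` everywhere on the quadrant, the zero initial conditions
`u_p(0,x) = 0`, `∂ₜu_p(0,x) = 0`, and the zero Neumann boundary condition
`∂ₓu_p(t,0) = 0`.  Here `z ^ α` denotes the real power (rpow). -/
theorem uP_is_nontrivial_classical_solution
    (a α : ℝ) (ha : 0 < a) (hα1 : 0 < α) (hα2 : α < 1) :
    ContDiffOn ℝ 2 (fun p : ℝ × ℝ => uP α p.1 p.2) (Ici 0 ×ˢ Ici 0) ∧
    (∀ t ∈ Ici (0:ℝ), ∀ x ∈ Ici (0:ℝ), 0 ≤ uP α t x) ∧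
    ¬ (∀ t ∈ Ici (0:ℝ), ∀ x ∈ Ici (0:ℝ), uP α t x = 0) ∧
    (∀ t ∈ Ici (0:ℝ), ∀ x ∈ Ici (0:ℝ),
      derivWithin (fun τ => derivWithin (fun σ => uP α σ x) (Ici 0) τ) (Ici 0) t
        - a ^ 2 * derivWithin (fun ξ => derivWithin (fun η => uP α t η) (Ici 0) ξ) (Ici 0) x
        = (uP α t x) ^ α) ∧
    (∀ x ∈ Ici (0:ℝ), uP α 0 x = 0) ∧
    (∀ x ∈ Ici (0:ℝ), derivWithin (fun τ => uP α τ x) (Ici 0) 0 = 0) ∧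
    (∀ t ∈ Ici (0:ℝ), derivWithin (fun ξ => uP α t ξ) (Ici 0) 0 = 0) := by
  have h1 : 0 < 1 - α := by linarith
  have hk : 2 < 2 / (1 - α) := by
    rw [lt_div_iff₀ h1]; linarith
  have hB : 0 < (1 - α) ^ 2 / (2 * (1 + α)) := by positivity
  have hkα : 2 / (1 - α) * α = 2 / (1 - α) - 1 - 1 := by
    field_simp; ring
  have hBk : (1 - α) ^ 2 / (2 * (1 + α)) * (2 / (1 - α) * (2 / (1 - α) - 1)) = 1 := by
    field_simp; ring
  have hCα : (((1 - α) ^ 2 / (2 * (1 + α))) ^ (1 / (1 - α))) ^ α * ((1 - α) ^ 2 / (2 * (1 + α)))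
      = ((1 - α) ^ 2 / (2 * (1 + α))) ^ (1 / (1 - α)) := by
    rw [← Real.rpow_mul hB.le]
    nth_rewrite 2 [← Real.rpow_one ((1 - α) ^ 2 / (2 * (1 + α)))]
    rw [← Real.rpow_add hB]
    congr 1
    field_simp; ring
  have hC : 0 < ((1 - α) ^ 2 / (2 * (1 + α))) ^ (1 / (1 - α)) := Real.rpow_pos_of_pos hB _
  simp only [uP]
  generalize (1 - α) ^ 2 / (2 * (1 + α)) = B at *
  generalize B ^ (1 / (1 - α)) = C at *
  generalize 2 / (1 - α) = k at *
  have hd1 : ∀ t ∈ Ici (0:ℝ), derivWithin (fun σ : ℝ => C * σ ^ k) (Ici 0) t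
      = C * (k * t ^ (k - 1)) := fun t ht =>
    (((Real.hasDerivAt_rpow_const (x := t) (p := k) (Or.inr (by linarith))).const_mul
      C).hasDerivWithinAt).derivWithin (uniqueDiffOn_Ici 0 t ht)
  have hd2 : ∀ t ∈ Ici (0:ℝ), derivWithin (fun τ : ℝ => C * (k * τ ^ (k - 1))) (Ici 0) t
      = C * (k * ((k - 1) * t ^ (k - 1 - 1))) := fun t ht =>
    ((((Real.hasDerivAt_rpow_const (x := t) (p := k - 1) (Or.inr (by linarith))).const_mul
      k).const_mul C).hasDerivWithinAt).derivWithin (uniqueDiffOn_Ici 0 t ht)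
  have h0 : (0:ℝ) ∈ Ici (0:ℝ) := self_mem_Ici
  refine ⟨?_, ?_, ?_, ?_, ?_, ?_, ?_⟩
  · have h2 : ContDiff ℝ 2 (fun x : ℝ => x ^ k) :=
      Real.contDiff_rpow_const_of_le (n := 2) (by push_cast; linarith)
    exact (contDiff_const.mul (h2.comp contDiff_fst)).contDiffOn
  · intro t ht x _
    exact mul_nonneg hC.le (Real.rpow_nonneg ht _)
  · intro h
    have := h 1 (by simp) 0 h0
    rw [Real.one_rpow, mul_one] at this
    exact hC.ne' this
  · intro t ht x _
    rw [derivWithin_congr hd1 (hd1 t ht), hd2 t ht]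
    simp only [derivWithin_fun_const, Pi.zero_apply, mul_zero, sub_zero]
    have ht' : (0:ℝ) ≤ t := ht
    rw [Real.mul_rpow hC.le (Real.rpow_nonneg ht' _), ← Real.rpow_mul ht', hkα]
    have : C * (k * (k - 1)) = C ^ α := by
      calc C * (k * (k - 1)) = C ^ α * (B * (k * (k - 1))) := by
            rw [← mul_assoc (C ^ α), hCα]
        _ = C ^ α := by rw [hBk, mul_one]
    rw [← this]; ring
  · intro x _
    rw [Real.zero_rpow (by linarith), mul_zero]
  · intro x _
    rw [hd1 0 h0, Real.zero_rpow (by linarith)]; ring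
  · intro t _
    simp
end

section
/- Let a > 0, 0 < α < 1, and let u_p(t,x) = ((1−α)²/(2(1+α)))^{1/(1−α)} · t^{2/(1−α)}. For every s > 0, the 'glued' function u_{p;s} : [0,∞)×[0,∞) → ℝ defined by u_{p;s}(t,x) = 0 for 0 ≤ t < s and u_{p;s}(t,x) = u_p(t−s, x) for t ≥ s is twice continuously differentiable on the closed quadrant [0,∞)×[0,∞) and is a classical solution of the problem: ∂²ₜu_{p;s}(t,x) − a²∂²ₓu_{p;s}(t,x) = (u_{p;s}(t,x))^α for all (t,x) ∈ [0,∞)×[0,∞), u_{p;s}(0,x) = 0 and ∂ₜu_{p;s}(0,x) = 0 for all x ≥ 0, and ∂ₓu_{p;s}(t,0) = 0 for all t ≥ 0. -/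
open Set

/-- The `glued` solution with parameter `s`: zero for `t < s` and the shifted
self-similar solution `u_p(t − s, x)` for `t ≥ s`. -/
noncomputable def uPGlued (α s : ℝ) : ℝ → ℝ → ℝ :=
  fun t x => if t < s then 0 else uP α (t - s) x

/-- Derivative of the truncated power. -/
lemma hasDerivAt_truncPow (p : ℝ) (hp : 1 < p) (r : ℝ) :
    HasDerivAt (fun r : ℝ => (max r 0) ^ p) (p * (max r 0) ^ (p - 1)) r := by
  rcases lt_trichotomy r 0 with h | h | h
  · rw [max_eq_right h.le, Real.zero_rpow (by linarith), mul_zero]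
    refine (hasDerivAt_const r (0:ℝ)).congr_of_eventuallyEq ?_
    filter_upwards [Iio_mem_nhds h] with y hy
    rw [max_eq_right (le_of_lt hy), Real.zero_rpow (by linarith)]
  · subst h
    have h1 : HasDerivWithinAt (fun r : ℝ => (max r 0) ^ p) (p * (max 0 0) ^ (p - 1)) (Ici 0) 0 := by
      rw [max_self]
      refine (Real.hasDerivAt_rpow_const (Or.inr hp.le)).hasDerivWithinAt.congr ?_ ?_
      · intro y hy
        simp only [max_eq_left (mem_Ici.1 hy)]
      · simp
    have h2 : HasDerivWithinAt (fun r : ℝ => (max r 0) ^ p) (p * (max 0 0) ^ (p - 1)) (Iic 0) 0 := by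
      rw [max_self, Real.zero_rpow (by linarith), mul_zero]
      refine (hasDerivAt_const 0 (0:ℝ)).hasDerivWithinAt.congr ?_ ?_
      · intro y hy
        simp only [max_eq_right (mem_Iic.1 hy)]
        rw [Real.zero_rpow (by linarith)]
      · rw [max_self, Real.zero_rpow (by linarith)]
    have h3 := h2.union h1
    rw [Iic_union_Ici] at h3
    exact hasDerivWithinAt_univ.1 h3
  · have := Real.hasDerivAt_rpow_const (x := r) (p := p) (Or.inr hp.le)
    rw [max_eq_left h.le]
    refine this.congr_of_eventuallyEq ?_
    filter_upwards [Ioi_mem_nhds h] with y hy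
    rw [max_eq_left (le_of_lt hy)]

lemma contDiff_truncPow (p : ℝ) (hp : 2 < p) :
    ContDiff ℝ 2 (fun r : ℝ => (max r 0) ^ p) := by
  have hd : deriv (fun r : ℝ => (max r 0) ^ p) = fun r => p * (max r 0) ^ (p - 1) :=
    funext fun r => (hasDerivAt_truncPow p (by linarith) r).deriv
  have hd2 : deriv (fun r : ℝ => p * (max r 0) ^ (p - 1))
      = fun r => p * ((p - 1) * (max r 0) ^ (p - 1 - 1)) :=
    funext fun r => ((hasDerivAt_truncPow (p - 1) (by linarith) r).const_mul p).deriv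
  rw [show (2 : WithTop ℕ∞) = 1 + 1 by norm_num, contDiff_succ_iff_deriv]
  refine ⟨fun r => (hasDerivAt_truncPow p (by linarith) r).differentiableAt, by simp, ?_⟩
  rw [hd, contDiff_one_iff_deriv]
  refine ⟨fun r => ((hasDerivAt_truncPow (p - 1) (by linarith) r).const_mul p).differentiableAt, ?_⟩
  rw [hd2]
  have : Continuous fun r : ℝ => (max r 0) ^ (p - 1 - 1) :=
    (continuous_id.max continuous_const).rpow_const fun _ => Or.inr (by linarith)
  fun_prop

lemma uPGlued_eq (α s t x : ℝ) (hα2 : α < 1) :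
    uPGlued α s t x = ((1 - α) ^ 2 / (2 * (1 + α))) ^ (1 / (1 - α))
      * (max (t - s) 0) ^ (2 / (1 - α)) := by
  have hp : 0 < 2 / (1 - α) := div_pos two_pos (by linarith)
  unfold uPGlued uP
  split_ifs with h
  · rw [max_eq_right (by linarith), Real.zero_rpow hp.ne', mul_zero]
  · rw [max_eq_left (by linarith)]

/-- **The glued functions are classical solutions.** For `a > 0`, `0 < α < 1` and any
`s > 0`, the glued function `u_{p;s}`, equal to `0` for `0 ≤ t < s` and to
`u_p(t−s,x) = ((1−α)²/(2(1+α)))^{1/(1−α)}·(t−s)^{2/(1−α)}` for `t ≥ s`, is of class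
`C²` on the closed quadrant `[0,∞) × [0,∞)` (one-sided derivatives at the boundary,
i.e. derivatives within the quadrant) and is a classical solution of the second mixed
problem: `∂ₜ²u_{p;s} − a²∂ₓ²u_{p;s} = u_{p;s}ᵅ` on the quadrant, with zero initial
conditions and zero Neumann boundary condition.  Here `z ^ α` denotes the real power
(rpow). -/
theorem uPGlued_is_classical_solution
    (a α : ℝ) (ha : 0 < a) (hα1 : 0 < α) (hα2 : α < 1)
    (s : ℝ) (hs : 0 < s) :
    ContDiffOn ℝ 2 (fun p : ℝ × ℝ => uPGlued α s p.1 p.2) (Ici 0 ×ˢ Ici 0) ∧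
    (∀ t ∈ Ici (0:ℝ), ∀ x ∈ Ici (0:ℝ),
      derivWithin (fun τ => derivWithin (fun σ => uPGlued α s σ x) (Ici 0) τ) (Ici 0) t
        - a ^ 2 *
          derivWithin (fun ξ => derivWithin (fun η => uPGlued α s t η) (Ici 0) ξ) (Ici 0) x
        = (uPGlued α s t x) ^ α) ∧
    (∀ x ∈ Ici (0:ℝ), uPGlued α s 0 x = 0) ∧
    (∀ x ∈ Ici (0:ℝ), derivWithin (fun τ => uPGlued α s τ x) (Ici 0) 0 = 0) ∧
    (∀ t ∈ Ici (0:ℝ), derivWithin (fun ξ => uPGlued α s t ξ) (Ici 0) 0 = 0) := by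
  set C : ℝ := ((1 - α) ^ 2 / (2 * (1 + α))) ^ (1 / (1 - α)) with hC
  set p : ℝ := 2 / (1 - α) with hpdef
  have h1 : 0 < 1 - α := by linarith
  have hp : 2 < p := by rw [hpdef, lt_div_iff₀ h1]; linarith
  have hu : ∀ t x, uPGlued α s t x = C * (max (t - s) 0) ^ p :=
    fun t x => uPGlued_eq α s t x hα2
  have hd1 : ∀ t, HasDerivAt (fun t => C * (max (t - s) 0) ^ p)
      (C * (p * (max (t - s) 0) ^ (p - 1))) t := fun t =>
    ((hasDerivAt_truncPow p (by linarith) (t - s)).comp_sub_const t s).const_mul C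
  have hd2 : ∀ t, HasDerivAt (fun t => C * (p * (max (t - s) 0) ^ (p - 1)))
      (C * (p * ((p - 1) * (max (t - s) 0) ^ (p - 1 - 1)))) t := fun t =>
    (((hasDerivAt_truncPow (p - 1) (by linarith) (t - s)).comp_sub_const t s).const_mul p).const_mul C
  have hU : UniqueDiffOn ℝ (Ici (0:ℝ)) := uniqueDiffOn_Ici 0
  have hw1 : ∀ t ∈ Ici (0:ℝ), derivWithin (fun t => C * (max (t - s) 0) ^ p) (Ici 0) t
      = C * (p * (max (t - s) 0) ^ (p - 1)) := fun t ht =>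
    (hd1 t).hasDerivWithinAt.derivWithin (hU t ht)
  simp only [hu]
  refine ⟨?_, ?_, ?_, ?_, ?_⟩
  · have h := (contDiff_truncPow p hp).comp
      ((contDiff_fst (𝕜 := ℝ) (E := ℝ) (F := ℝ) (n := 2)).sub (contDiff_const (c := s)))
    exact (contDiff_const.mul h).contDiffOn
  · intro t ht x hx
    rw [derivWithin_congr hw1 (hw1 t ht), (hd2 t).hasDerivWithinAt.derivWithin (hU t ht)]
    simp only [derivWithin_fun_const, Pi.zero_apply, mul_zero, sub_zero]
    have hm : 0 ≤ max (t - s) 0 := le_max_right _ _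
    have hK : 0 < (1 - α) ^ 2 / (2 * (1 + α)) := by positivity
    have hC0 : 0 < C := Real.rpow_pos_of_pos hK _
    rw [Real.mul_rpow hC0.le (Real.rpow_nonneg hm _), ← Real.rpow_mul hm,
      show p - 1 - 1 = p * α by rw [hpdef]; field_simp; ring]
    have hCC : C = (1 - α) ^ 2 / (2 * (1 + α)) * C ^ α := by
      rw [hC, ← Real.rpow_mul hK.le]
      nth_rewrite 2 [← Real.rpow_one ((1 - α) ^ 2 / (2 * (1 + α)))]
      rw [← Real.rpow_add hK]
      congr 1
      field_simp
      ring
    have hk : (1 - α) ^ 2 / (2 * (1 + α)) * (p * (p - 1)) = 1 := by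
      rw [hpdef]; field_simp; ring
    calc C * (p * ((p - 1) * max (t - s) 0 ^ (p * α)))
        = C * (p * (p - 1)) * max (t - s) 0 ^ (p * α) := by ring
      _ = ((1 - α) ^ 2 / (2 * (1 + α)) * C ^ α) * (p * (p - 1)) * max (t - s) 0 ^ (p * α) := by
          rw [← hCC]
      _ = ((1 - α) ^ 2 / (2 * (1 + α)) * (p * (p - 1))) * (C ^ α * max (t - s) 0 ^ (p * α)) := by
          ring
      _ = _ := by rw [hk, one_mul]
  · intro x _
    rw [max_eq_right (by linarith), Real.zero_rpow (by linarith), mul_zero]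
  · intro x _
    rw [hw1 0 self_mem_Ici, max_eq_right (by linarith), Real.zero_rpow (by linarith)]
    ring
  · intro t _
    simp
end
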